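/- arXiv:1504.06783 — 2 statements merged into one kernel-verified Lean document; each statement's English description precedes it below -/
import Mathlib

section
/- Let M and N be nonzero finitely generated modules over a Noetherian local ring R. Then M ⊕ N is a sequentially Cohen-Macaulay R-module if and only if both M and N are sequentially Cohen-Macaulay R-modules. -/
open IsLocalRing

/-- The (Krull) dimension of a module: `dim_R M = dim (R / ann_R M)`;
the zero module has dimension `⊥` (i.e. `-∞`). -/
noncomputable def moduleDim (R : Type*) [CommRing R] (M : Type*) [AddCommGroup M]
    [Module R M] : WithBot ℕ∞ :=
  ringKrullDim (R ⧸ Module.annihilator R M)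

/-- `dimLe d n` means `d ≤ n` where `n : ℤ` and `d` is a dimension in `WithBot ℕ∞`
(so for `n < 0` this means `d = ⊥`, i.e. the module is zero). -/
def dimLe (d : WithBot ℕ∞) (n : ℤ) : Prop :=
  if 0 ≤ n then d ≤ ((n.toNat : ℕ∞) : WithBot ℕ∞) else d = ⊥

/-- The depth of a module over a Noetherian local ring: the supremum of lengths of
regular sequences on `M` contained in the maximal ideal. -/
noncomputable def moduleDepth (R : Type*) [CommRing R] [IsLocalRing R] (M : Type*)
    [AddCommGroup M] [Module R M] : ℕ∞ :=
  sSup {n : ℕ∞ | ∃ rs : List R, (rs.length : ℕ∞) = n ∧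
    (∀ r ∈ rs, r ∈ maximalIdeal R) ∧ RingTheory.Sequence.IsRegular M rs}

/-- A module over a Noetherian local ring is Cohen-Macaulay if it is zero or
`depth M = dim M`. -/
def IsCMModule (R : Type*) [CommRing R] [IsLocalRing R] (M : Type*) [AddCommGroup M]
    [Module R M] : Prop :=
  Nontrivial M → (moduleDepth R M : WithBot ℕ∞) = moduleDim R M

/-- A module over a (not necessarily local) commutative ring is Cohen-Macaulay if all its
localizations at primes are Cohen-Macaulay. -/
def IsCMModuleGen (R : Type*) [CommRing R] (M : Type*) [AddCommGroup M] [Module R M] : Prop :=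
  ∀ (P : Ideal R) [P.IsPrime],
    IsCMModule (Localization.AtPrime P) (LocalizedModule P.primeCompl M)

/-- `D : Fin (ℓ+1) → Submodule R M` is the dimension filtration of `M`:
`D 0 = 0`, `D ℓ = M`, the chain is strictly increasing, each `D i` (for `i ≥ 1`) is the
largest submodule of its dimension, and every nonzero submodule which is largest among
submodules of dimension at most its own dimension occurs in the chain. -/
def IsDimFiltration (R : Type*) [CommRing R] (M : Type*) [AddCommGroup M] [Module R M]
    (ℓ : ℕ) (D : Fin (ℓ + 1) → Submodule R M) : Prop :=
  D 0 = ⊥ ∧ D (Fin.last ℓ) = ⊤ ∧ StrictMono D ∧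
  (∀ i : Fin ℓ, IsGreatest
    {N : Submodule R M | moduleDim R ↥N ≤ moduleDim R ↥(D i.succ)} (D i.succ)) ∧
  (∀ N : Submodule R M, N ≠ ⊥ →
    IsGreatest {N' : Submodule R M | moduleDim R ↥N' ≤ moduleDim R ↥N} N → ∃ i, D i = N)

/-- A module over a local ring is sequentially Cohen-Macaulay if the consecutive quotients
of its dimension filtration are Cohen-Macaulay. -/
def IsSeqCM (R : Type*) [CommRing R] [IsLocalRing R] (M : Type*) [AddCommGroup M]
    [Module R M] : Prop :=
  ∃ (ℓ : ℕ) (D : Fin (ℓ + 1) → Submodule R M), IsDimFiltration R M ℓ D ∧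
    ∀ i : Fin ℓ, IsCMModule R
      (↥(D i.succ) ⧸ (D i.castSucc).comap (D i.succ).subtype)

/-- Sequentially Cohen-Macaulay over a not necessarily local ring. -/
def IsSeqCMGen (R : Type*) [CommRing R] (M : Type*) [AddCommGroup M] [Module R M] : Prop :=
  ∃ (ℓ : ℕ) (D : Fin (ℓ + 1) → Submodule R M), IsDimFiltration R M ℓ D ∧
    ∀ i : Fin ℓ, IsCMModuleGen R
      (↥(D i.succ) ⧸ (D i.castSucc).comap (D i.succ).subtype)

/-- A local ring is sequentially Cohen-Macaulay if it is so as a module over itself. -/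
def IsSeqCMRing (R : Type*) [CommRing R] [IsLocalRing R] : Prop := IsSeqCM R R

/-!
Write `M_{<k}` for the largest submodule of `M` of dimension less than `k`. The dimension
filtration of `M` is the sequence `M_{<0} ≤ M_{<1} ≤ ⋯` with repetitions removed, so `M` is
sequentially Cohen-Macaulay iff every quotient `M_{<k+1} / M_{<k}` is Cohen-Macaulay. These
quotients commute with direct sums and are zero or of dimension `k`. For nonzero `A` and `B` of
the same dimension, `A × B` is Cohen-Macaulay iff both are, because `depth (A × B) = min (depth A)
(depth B)`; the latter holds since depth is detected by the vanishing of the additive functors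
`Ext^i(R/𝔪, -)`.
-/

open Module CategoryTheory Abelian

section Order

variable {α : Type*}

lemma krullDim_union_of_isUpperSet [Preorder α] {s t : Set α} (hs : IsUpperSet s)
    (ht : IsUpperSet t) :
    Order.krullDim ↥(s ∪ t) = max (Order.krullDim s) (Order.krullDim t) := by
  refine le_antisymm (iSup_le fun p ↦ ?_) (max_le ?_ ?_)
  · rcases p.head.2 with h | h
    · exact le_max_of_le_left (Order.LTSeries.length_le_krullDim (α := s)
        ⟨p.length, fun i ↦ ⟨p i, hs (p.head_le i) h⟩, p.step⟩)
    · exact le_max_of_le_right (Order.LTSeries.length_le_krullDim (α := t)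
        ⟨p.length, fun i ↦ ⟨p i, ht (p.head_le i) h⟩, p.step⟩)
  · exact Order.krullDim_le_of_strictMono (Set.inclusion Set.subset_union_left) fun _ _ h ↦ h
  · exact Order.krullDim_le_of_strictMono (Set.inclusion Set.subset_union_right) fun _ _ h ↦ h

lemma exists_nat_forall_le_iff_lt {d : WithBot ℕ∞} (hd : d < ⊤) :
    ∃ k : ℕ, ∀ e : WithBot ℕ∞, e ≤ d ↔ e < k := by
  rcases eq_or_ne d ⊥ with rfl | hbot
  · exact ⟨0, fun e ↦ le_bot_iff.trans WithBot.lt_coe_bot.symm⟩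
  · obtain ⟨c, rfl⟩ := WithBot.ne_bot_iff_exists.mp hbot
    obtain ⟨n, rfl⟩ := ENat.ne_top_iff_exists.mp fun h : c = ⊤ ↦ hd.ne (congrArg _ h)
    exact ⟨n + 1, fun e ↦ by rw [Nat.cast_succ, ENat.WithBot.lt_add_one_iff]; rfl⟩

variable [PartialOrder α] {f : ℕ → α} (hf : Monotone f)

include hf in
lemma exists_strictMono_fin_range_eq [WellFoundedGT α] :
    ∃ (ℓ : ℕ) (D : Fin (ℓ + 1) → α), StrictMono D ∧ Set.range D = Set.range f := by
  classical
  obtain ⟨N, hN⟩ := WellFoundedGT.monotone_chain_condition ⟨f, hf⟩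
  let J := {n ∈ Finset.range (N + 1) | ∀ m < n, f m ≠ f n}
  have exists_mem_J (n : ℕ) : ∃ j ∈ J, f j = f n := by
    have hex : ∃ m, f m = f n := ⟨n, rfl⟩
    have hmin (m : ℕ) (hm : m < Nat.find hex) : f m ≠ f (Nat.find hex) :=
      (Nat.find_spec hex).symm ▸ Nat.find_min hex hm
    refine ⟨Nat.find hex, Finset.mem_filter.mpr ⟨Finset.mem_range_succ_iff.mpr ?_, hmin⟩,
      Nat.find_spec hex⟩
    by_contra! hlt
    exact hmin N hlt (hN _ hlt.le)
  have hcard : J.card = J.card - 1 + 1 := by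
    obtain ⟨j, hj, -⟩ := exists_mem_J 0
    exact (Nat.sub_add_cancel (Finset.card_pos.mpr ⟨j, hj⟩)).symm
  refine ⟨J.card - 1, f ∘ J.orderEmbOfFin hcard, fun a b hab ↦ ?_, ?_⟩
  · have hlt := (J.orderEmbOfFin hcard).strictMono hab
    exact (hf hlt.le).lt_of_ne ((Finset.mem_filter.mp (J.orderEmbOfFin_mem hcard b)).2 _ hlt)
  · rw [Set.range_comp, Finset.range_orderEmbOfFin]
    exact (Set.image_subset_range _ _).antisymm (Set.range_subset_iff.mpr exists_mem_J)

variable {ℓ : ℕ} {D : Fin (ℓ + 1) → α} (hD : StrictMono D) (h : Set.range D = Set.range f)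

include hf hD h

lemma exists_eq_castSucc_and_eq_succ (i : Fin ℓ) :
    ∃ n, f n = D i.castSucc ∧ f (n + 1) = D i.succ := by
  classical
  have exists_f (j : Fin (ℓ + 1)) : ∃ n, f n = D j := h.subset ⟨j, rfl⟩
  have hlt : D i.castSucc < D i.succ := hD i.castSucc_lt_succ
  obtain ⟨m, hm⟩ := exists_f i.castSucc
  have hmlt : m < Nat.find (exists_f i.succ) :=
    hf.reflect_lt (by rwa [hm, Nat.find_spec (exists_f i.succ)])
  obtain ⟨n, hn⟩ := Nat.exists_eq_add_one_of_ne_zero hmlt.ne_bot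
  have hsucc : f (n + 1) = D i.succ := hn ▸ Nat.find_spec (exists_f i.succ)
  have hne : f n ≠ D i.succ := Nat.find_min (exists_f i.succ) (by omega)
  obtain ⟨j, hj⟩ := h.superset ⟨n, rfl⟩
  have hjlt : j < i.succ := hD.lt_iff_lt.mp (hj ▸ hsucc ▸ (hf n.le_succ).lt_of_ne (hsucc ▸ hne))
  have hle : i.castSucc ≤ j := hD.le_iff_le.mp (hj ▸ hm ▸ hf (by omega))
  exact ⟨n, hj ▸ congrArg D (le_antisymm (Fin.le_castSucc_iff.mpr hjlt) hle), hsucc⟩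

lemma exists_castSucc_eq_and_succ_eq {n : ℕ} (hn : f n ≠ f (n + 1)) :
    ∃ i : Fin ℓ, D i.castSucc = f n ∧ D i.succ = f (n + 1) := by
  obtain ⟨a, ha⟩ := h.superset ⟨n, rfl⟩
  obtain ⟨b, hb⟩ := h.superset ⟨n + 1, rfl⟩
  have hab : a < b := hD.lt_iff_lt.mp (by rw [ha, hb]; exact (hf n.le_succ).lt_of_ne hn)
  obtain ⟨i, rfl⟩ := Fin.exists_succ_eq.mpr (Fin.ne_zero_of_lt hab)
  obtain ⟨m, hm, hm'⟩ := exists_eq_castSucc_and_eq_succ hf hD h i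
  have hle : n ≤ m := by
    have : f n < f (m + 1) := by rw [hm', hb]; exact (hf n.le_succ).lt_of_ne hn
    exact Nat.lt_succ_iff.mp (hf.reflect_lt this)
  have hge : m ≤ n := by
    have : f m < f (n + 1) := by rw [hm, ← hb]; exact hD i.castSucc_lt_succ
    exact Nat.lt_succ_iff.mp (hf.reflect_lt this)
  exact ⟨i, by rw [← hm, hge.antisymm hle], hb⟩

lemma forall_castSucc_succ_iff {r : α → α → Prop} (hr : ∀ a, r a a) :
    (∀ i : Fin ℓ, r (D i.castSucc) (D i.succ)) ↔ ∀ n, r (f n) (f (n + 1)) := by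
  refine ⟨fun hrD n ↦ ?_, fun hrf i ↦ ?_⟩
  · by_cases hn : f n = f (n + 1)
    · exact hn ▸ hr _
    · obtain ⟨i, hi, hi'⟩ := exists_castSucc_eq_and_succ_eq hf hD h hn
      exact hi ▸ hi' ▸ hrD i
  · obtain ⟨n, hn, hn'⟩ := exists_eq_castSucc_and_eq_succ hf hD h i
    exact hn ▸ hn' ▸ hrf n

end Order

section Subquotient

variable {R M N : Type*} [CommRing R] [AddCommGroup M] [Module R M] [AddCommGroup N] [Module R N]

/-- The subquotient `P / Q` of a module. The inclusion `Q ≤ P` is not required: in general this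
is `P / (P ⊓ Q)`. -/
abbrev Subquotient (P Q : Submodule R M) : Type _ :=
  P ⧸ Q.comap P.subtype

lemma subsingleton_subquotient_iff {P Q : Submodule R M} :
    Subsingleton (Subquotient P Q) ↔ P ≤ Q := by
  rw [Submodule.Quotient.subsingleton_iff, Submodule.comap_subtype_eq_top]

/-- The isomorphism `(P × P') / (Q × Q') ≃ P / Q × P' / Q'` induced by the two projections. -/
noncomputable def subquotientProdEquiv (P Q : Submodule R M) (P' Q' : Submodule R N) :
    Subquotient (P.prod P') (Q.prod Q') ≃ₗ[R] Subquotient P Q × Subquotient P' Q' :=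
  let f : P.prod P' →ₗ[R] Subquotient P Q × Subquotient P' Q' :=
    .prodMap (Submodule.mkQ _) (Submodule.mkQ _) ∘ₗ
      .prod ((LinearMap.fst R M N).restrict fun _ h ↦ h.1)
        ((LinearMap.snd R M N).restrict fun _ h ↦ h.2)
  have ker_f : (Q.prod Q').comap (P.prod P').subtype = LinearMap.ker f := by
    ext x
    simp only [f, Submodule.mem_comap, Submodule.subtype_apply, Submodule.mem_prod,
      LinearMap.mem_ker, LinearMap.comp_apply, LinearMap.prodMap_apply, Prod.mk_eq_zero,
      Submodule.mkQ_apply, Submodule.Quotient.mk_eq_zero]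
    rfl
  have f_surjective : Function.Surjective f := by
    rintro ⟨a, b⟩
    obtain ⟨x, rfl⟩ := Submodule.mkQ_surjective _ a
    obtain ⟨y, rfl⟩ := Submodule.mkQ_surjective _ b
    exact ⟨⟨(x, y), x.2, y.2⟩, rfl⟩
  (Submodule.quotEquivOfEq _ _ ker_f).trans (f.quotKerEquivOfSurjective f_surjective)

end Subquotient

section Dimension

variable {R : Type*} [CommRing R]

lemma moduleDim_eq_supportDim (A : Type*) [AddCommGroup A] [Module R A] [Module.Finite R A] :
    moduleDim R A = supportDim R A :=
  (supportDim_eq_ringKrullDim_quotient_annihilator (R := R) A).symm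

lemma supportDim_eq_max_of_exact {A B C : Type*} [AddCommGroup A] [Module R A] [AddCommGroup B]
    [Module R B] [AddCommGroup C] [Module R C] {f : A →ₗ[R] B} {g : B →ₗ[R] C}
    (h : Function.Exact f g) (hf : Function.Injective f) (hg : Function.Surjective g) :
    supportDim R B = max (supportDim R A) (supportDim R C) := by
  rw [supportDim, support_of_exact h hf hg]
  exact krullDim_union_of_isUpperSet (fun _ _ ↦ mem_support_mono) fun _ _ ↦ mem_support_mono

variable {M N : Type*} [AddCommGroup M] [Module R M] [AddCommGroup N] [Module R N]

variable (R M N) in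
lemma supportDim_prod : supportDim R (M × N) = max (supportDim R M) (supportDim R N) :=
  supportDim_eq_max_of_exact .inl_snd LinearMap.inl_injective LinearMap.snd_surjective

lemma supportDim_mono {P Q : Submodule R M} (h : P ≤ Q) : supportDim R P ≤ supportDim R Q :=
  supportDim_le_of_injective _ (Submodule.inclusion_injective h)

lemma supportDim_sup_le (P Q : Submodule R M) :
    supportDim R ↥(P ⊔ Q) ≤ max (supportDim R P) (supportDim R Q) := by
  have hrange : LinearMap.range (P.subtype.coprod Q.subtype) = P ⊔ Q := by
    rw [LinearMap.range_coprod, Submodule.range_subtype, Submodule.range_subtype]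
  rw [← hrange, ← supportDim_prod]
  exact supportDim_le_of_surjective _ (LinearMap.surjective_rangeRestrict _)

lemma supportDim_map_le (f : M →ₗ[R] N) (P : Submodule R M) :
    supportDim R (P.map f) ≤ supportDim R P :=
  supportDim_le_of_surjective _ (f.submoduleMap_surjective P)

lemma supportDim_eq_max_subquotient {P Q : Submodule R M} (h : Q ≤ P) :
    supportDim R P = max (supportDim R Q) (supportDim R (Subquotient P Q)) := by
  rw [← supportDim_eq_of_equiv (Submodule.comapSubtypeEquivOfLe h)]
  exact supportDim_eq_max_of_exact (LinearMap.exact_subtype_mkQ _)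
    (Submodule.subtype_injective _) (Submodule.mkQ_surjective _)

end Dimension

section DimLtSubmodule

variable {R : Type*} [CommRing R] {M N : Type*} [AddCommGroup M] [Module R M] [AddCommGroup N]
  [Module R N]

variable (R M) in
/-- The submodule of the elements generating a submodule of dimension less than `k`. If `M` is
Noetherian it is the largest submodule of dimension less than `k`, that is, the term `M_{k-1}` of
the dimension filtration; the strict inequality makes the zero submodule the term at `k = 0`. -/
def dimLtSubmodule (k : ℕ) : Submodule R M where
  carrier := {x | supportDim R (R ∙ x) < k}
  zero_mem' := by
    rw [Set.mem_ofPred_eq, Submodule.span_zero_singleton, supportDim_eq_bot_of_subsingleton]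
    exact WithBot.bot_lt_coe _
  add_mem' {x y} hx hy := by
    have hle : R ∙ (x + y) ≤ R ∙ x ⊔ R ∙ y :=
      (Submodule.span_singleton_le_iff_mem _ _).mpr <| Submodule.add_mem_sup
        (Submodule.mem_span_singleton_self x) (Submodule.mem_span_singleton_self y)
    exact ((supportDim_mono hle).trans (supportDim_sup_le _ _)).trans_lt (max_lt hx hy)
  smul_mem' r x hx := (supportDim_mono (Submodule.span_singleton_smul_le R r x)).trans_lt hx

lemma mem_dimLtSubmodule {k : ℕ} {x : M} :
    x ∈ dimLtSubmodule R M k ↔ supportDim R (R ∙ x) < k := Iff.rfl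

variable (R M) in
lemma dimLtSubmodule_zero : dimLtSubmodule R M 0 = ⊥ := by
  refine (Submodule.eq_bot_iff _).mpr fun x hx ↦ ?_
  have : Subsingleton (R ∙ x) := by
    rwa [mem_dimLtSubmodule, Nat.cast_zero, WithBot.lt_zero_iff_eq_bot,
      supportDim_eq_bot_iff_subsingleton] at hx
  exact Submodule.span_singleton_eq_bot.mp ((Submodule.subsingleton_iff_eq_bot).mp this)

variable (R M) in
lemma dimLtSubmodule_mono : Monotone (dimLtSubmodule R M) := fun _ _ h _ hx ↦
  (mem_dimLtSubmodule.mp hx).trans_le (Nat.mono_cast h)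

lemma map_dimLtSubmodule_le (f : M →ₗ[R] N) (k : ℕ) :
    (dimLtSubmodule R M k).map f ≤ dimLtSubmodule R N k := by
  rintro _ ⟨x, hx, rfl⟩
  rw [mem_dimLtSubmodule, ← Set.image_singleton, ← Submodule.map_span]
  exact (supportDim_map_le f _).trans_lt hx

lemma dimLtSubmodule_prod (k : ℕ) :
    dimLtSubmodule R (M × N) k = (dimLtSubmodule R M k).prod (dimLtSubmodule R N k) :=
  le_antisymm
    ((Submodule.le_prod_iff R M N).mpr ⟨map_dimLtSubmodule_le _ k, map_dimLtSubmodule_le _ k⟩)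
    ((Submodule.prod_le_iff R M N).mpr ⟨map_dimLtSubmodule_le _ k, map_dimLtSubmodule_le _ k⟩)

variable (R M) in
/-- The part of `M` of dimension exactly `k`: the largest submodule of dimension at most `k` modulo
the largest submodule of dimension less than `k`. -/
abbrev DimQuotient (k : ℕ) : Type _ :=
  Subquotient (dimLtSubmodule R M (k + 1)) (dimLtSubmodule R M k)

variable [IsNoetherian R M]

lemma le_dimLtSubmodule_iff {P : Submodule R M} {k : ℕ} :
    P ≤ dimLtSubmodule R M k ↔ supportDim R P < k := by
  refine ⟨fun hP ↦ ?_, fun hP x hx ↦ (supportDim_mono ?_).trans_lt hP⟩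
  · induction P, IsNoetherian.noetherian P using Submodule.fg_induction with
    | singleton x => exact hP (Submodule.mem_span_singleton_self x)
    | sup P Q _ _ hP' hQ' =>
      exact (supportDim_sup_le P Q).trans_lt
        (max_lt (hP' (le_sup_left.trans hP)) (hQ' (le_sup_right.trans hP)))
  · rwa [Submodule.span_singleton_le_iff_mem]

variable (R M) in
lemma supportDim_dimLtSubmodule_lt (k : ℕ) : supportDim R (dimLtSubmodule R M k) < k :=
  le_dimLtSubmodule_iff.mp le_rfl

variable (R M) in
lemma supportDim_dimQuotient (k : ℕ) [Nontrivial (DimQuotient R M k)] :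
    supportDim R (DimQuotient R M k) = k := by
  have hmax := supportDim_eq_max_subquotient (dimLtSubmodule_mono R M k.le_succ)
  have hlt : supportDim R (dimLtSubmodule R M (k + 1)) < (k : WithBot ℕ∞) + 1 := by
    exact_mod_cast supportDim_dimLtSubmodule_lt R M (k + 1)
  refine le_antisymm (ENat.WithBot.lt_add_one_iff.mp ?_) (le_of_not_gt fun hlt' ↦ ?_)
  · exact (hmax ▸ le_max_right _ _).trans_lt hlt
  · refine not_subsingleton (DimQuotient R M k) (subsingleton_subquotient_iff.mpr ?_)
    rw [le_dimLtSubmodule_iff, hmax]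
    exact max_lt (supportDim_dimLtSubmodule_lt R M k) hlt'

end DimLtSubmodule

section Depth

universe u v w

lemma subsingleton_ext_prod_iff {R : Type u} [CommRing R] [Small.{v} R] (X : ModuleCat.{v} R)
    (A B : Type v) [AddCommGroup A] [Module R A] [AddCommGroup B] [Module R B] (i : ℕ) :
    Subsingleton (Ext X (ModuleCat.of R (A × B)) i) ↔
      Subsingleton (Ext X (ModuleCat.of R A) i) ∧ Subsingleton (Ext X (ModuleCat.of R B) i) := by
  let e : Ext X (ModuleCat.of R (A × B)) i ≃
      Ext X (ModuleCat.of R A) i × Ext X (ModuleCat.of R B) i :=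
    ((extFunctorObj X i).mapIso (ModuleCat.biprodIsoProd (.of R A) (.of R B)).symm
      |>.addCommGroupIsoToAddEquiv.trans Ext.addEquivBiprod).toEquiv
  rw [e.subsingleton_congr]
  exact ⟨fun _ ↦ ⟨(Prod.fst_surjective (β := Ext X (ModuleCat.of R B) i)).subsingleton,
      (Prod.snd_surjective (α := Ext X (ModuleCat.of R A) i)).subsingleton⟩,
    fun ⟨_, _⟩ ↦ inferInstance⟩

variable {R : Type u} [CommRing R] [IsLocalRing R]

section Congr

variable {A B : Type*} [AddCommGroup A] [Module R A] [AddCommGroup B] [Module R B]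

lemma moduleDepth_congr (e : A ≃ₗ[R] B) : moduleDepth R A = moduleDepth R B := by
  simp only [moduleDepth, e.isRegular_congr]

lemma isCMModule_congr (e : A ≃ₗ[R] B) : IsCMModule R A ↔ IsCMModule R B := by
  rw [IsCMModule, IsCMModule, moduleDepth_congr e, moduleDim, moduleDim, e.annihilator_eq,
    e.toEquiv.nontrivial_congr]

variable (R A) in
lemma isCMModule_of_subsingleton [Subsingleton A] : IsCMModule R A :=
  fun h ↦ absurd h (not_nontrivial A)

end Congr

variable [IsNoetherianRing R]

lemma exists_isRegular_iff_subsingleton_ext [Small.{v} R] (n : ℕ) (A : Type v) [AddCommGroup A]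
    [Module R A] [Module.Finite R A] [Nontrivial A] :
    (∃ rs : List R, rs.length = n ∧ (∀ r ∈ rs, r ∈ maximalIdeal R) ∧
        RingTheory.Sequence.IsRegular A rs) ↔
      ∀ i < n, Subsingleton
        (Ext (ModuleCat.of R (Shrink.{v} (R ⧸ maximalIdeal R))) (ModuleCat.of R A) i) :=
  have smul_lt_top : maximalIdeal R • (⊤ : Submodule R A) < ⊤ :=
    (Submodule.top_ne_ideal_smul_of_le_jacobson_annihilator
      (maximalIdeal_le_jacobson _)).symm.lt_top
  (ModuleCat.exists_isRegular_tfae (maximalIdeal R) n (ModuleCat.of R A) smul_lt_top).out 3 1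

lemma natCast_le_moduleDepth_iff [Small.{v} R] (n : ℕ) (A : Type v) [AddCommGroup A]
    [Module R A] [Module.Finite R A] [Nontrivial A] :
    n ≤ moduleDepth R A ↔ ∀ i < n, Subsingleton
      (Ext (ModuleCat.of R (Shrink.{v} (R ⧸ maximalIdeal R))) (ModuleCat.of R A) i) := by
  refine ⟨fun hn i hi ↦ ?_, fun h ↦ ?_⟩
  · obtain ⟨_, ⟨rs, rfl, hrs⟩, hlt⟩ := lt_sSup_iff.mp ((Nat.cast_lt.mpr hi).trans_le hn)
    exact (exists_isRegular_iff_subsingleton_ext rs.length A).mp ⟨rs, rfl, hrs⟩ i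
      (Nat.cast_lt.mp hlt)
  · obtain ⟨rs, rfl, hrs⟩ := (exists_isRegular_iff_subsingleton_ext n A).mpr h
    exact le_sSup ⟨rs, rfl, hrs⟩

section Prod

variable (A : Type v) [AddCommGroup A] [Module R A] [Module.Finite R A]
  (B : Type w) [AddCommGroup B] [Module R B] [Module.Finite R B]

variable (R) in
lemma moduleDepth_prod [Nontrivial A] [Nontrivial B] :
    moduleDepth R (A × B) = min (moduleDepth R A) (moduleDepth R B) := by
  have : Small.{max u v w} R := small_max.{max v w} R
  let eA : ULift.{max u v w} A ≃ₗ[R] A := ULift.moduleEquiv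
  let eB : ULift.{max u v w} B ≃ₗ[R] B := ULift.moduleEquiv
  rw [← moduleDepth_congr (eA.prodCongr eB), ← moduleDepth_congr eA, ← moduleDepth_congr eB]
  refine ENat.eq_of_forall_natCast_le_iff fun n ↦ ?_
  simp only [le_min_iff, natCast_le_moduleDepth_iff, subsingleton_ext_prod_iff, forall_and]

variable (R) in
lemma moduleDepth_le_supportDim [Nontrivial A] : moduleDepth R A ≤ supportDim R A := by
  obtain ⟨d, hd⟩ := WithBot.ne_bot_iff_exists.mp (supportDim_ne_bot_of_nontrivial R A)
  rw [← hd, WithBot.coe_le_coe]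
  refine sSup_le ?_
  rintro _ ⟨rs, rfl, -, hrs⟩
  have := hrs.quot_ofList_smul_nontrivial ⊤
  obtain ⟨c, hc⟩ := WithBot.ne_bot_iff_exists.mp
    (supportDim_ne_bot_of_nontrivial R (A ⧸ Ideal.ofList rs • (⊤ : Submodule R A)))
  have hadd : (c + rs.length : WithBot ℕ∞) = d := by
    rw [hc, hd, supportDim_add_length_eq_supportDim_of_isRegular rs hrs]
  exact le_add_self.trans_eq (mod_cast hadd)

lemma isCMModule_iff_supportDim_le_moduleDepth [Nontrivial A] :
    IsCMModule R A ↔ supportDim R A ≤ moduleDepth R A := by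
  rw [IsCMModule, moduleDim_eq_supportDim, forall_prop_of_true ‹_›,
    (moduleDepth_le_supportDim R A).ge_iff_eq, eq_comm]

variable {A B}

lemma isCMModule_prod_iff (hdim : Nontrivial A → Nontrivial B → supportDim R A = supportDim R B) :
    IsCMModule R (A × B) ↔ IsCMModule R A ∧ IsCMModule R B := by
  rcases subsingleton_or_nontrivial A with hA | hA
  · have := uniqueOfSubsingleton (0 : A)
    simp only [isCMModule_congr (LinearEquiv.uniqueProd (R := R) (M := B) (M₂ := A)),
      isCMModule_of_subsingleton, true_and]
  rcases subsingleton_or_nontrivial B with hB | hB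
  · have := uniqueOfSubsingleton (0 : B)
    simp only [isCMModule_congr (LinearEquiv.prodUnique (R := R) (M := A) (M₂ := B)),
      isCMModule_of_subsingleton, and_true]
  simp only [isCMModule_iff_supportDim_le_moduleDepth, supportDim_prod, moduleDepth_prod,
    ← hdim hA hB, max_self, WithBot.coe_min, le_min_iff]

end Prod

end Depth

section Filtration

variable {R M : Type*} [CommRing R] [FiniteRingKrullDim R] [AddCommGroup M] [Module R M]
  [IsNoetherian R M]

lemma isGreatest_moduleDim_le_iff {P : Submodule R M} :
    IsGreatest {N : Submodule R M | moduleDim R N ≤ moduleDim R P} P ↔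
      P ∈ Set.range (dimLtSubmodule R M) := by
  simp only [moduleDim_eq_supportDim]
  constructor
  · intro hP
    obtain ⟨k, hk⟩ := exists_nat_forall_le_iff_lt
      ((supportDim_le_ringKrullDim R P).trans_lt ringKrullDim_lt_top)
    exact ⟨k, le_antisymm (hP.2 ((hk _).mpr (supportDim_dimLtSubmodule_lt R M k)))
      (le_dimLtSubmodule_iff.mpr ((hk _).mp le_rfl))⟩
  · rintro ⟨k, rfl⟩
    exact ⟨le_refl (supportDim R _), fun N hN ↦
      le_dimLtSubmodule_iff.mpr (hN.trans_lt (supportDim_dimLtSubmodule_lt R M k))⟩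

lemma isDimFiltration_iff {ℓ : ℕ} {D : Fin (ℓ + 1) → Submodule R M} :
    IsDimFiltration R M ℓ D ↔ StrictMono D ∧ Set.range D = Set.range (dimLtSubmodule R M) := by
  have bot_mem : ⊥ ∈ Set.range (dimLtSubmodule R M) := ⟨0, dimLtSubmodule_zero R M⟩
  have top_mem : ⊤ ∈ Set.range (dimLtSubmodule R M) :=
    isGreatest_moduleDim_le_iff.mp ⟨le_refl (moduleDim R _), fun N _ ↦ le_top⟩
  simp only [IsDimFiltration, isGreatest_moduleDim_le_iff]
  constructor
  · rintro ⟨hbot, -, hD, hsucc, hcomplete⟩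
    refine ⟨hD, (Set.range_subset_iff.mpr (Fin.cases (hbot ▸ bot_mem) hsucc)).antisymm
      fun P hP ↦ ?_⟩
    rcases eq_or_ne P ⊥ with rfl | hne
    · exact ⟨0, hbot⟩
    · exact hcomplete P hne hP
  · rintro ⟨hD, h⟩
    obtain ⟨i, hi⟩ := h.superset bot_mem
    obtain ⟨j, hj⟩ := h.superset top_mem
    exact ⟨le_bot_iff.mp (hi ▸ hD.monotone i.zero_le), top_le_iff.mp (hj ▸ hD.monotone j.le_last),
      hD, fun i ↦ h.subset ⟨i.succ, rfl⟩, fun P _ hP ↦ h.superset hP⟩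

variable (R M) in
lemma isSeqCM_iff_forall_isCMModule_dimQuotient [IsLocalRing R] :
    IsSeqCM R M ↔ ∀ k, IsCMModule R (DimQuotient R M k) := by
  have forall_iff {ℓ : ℕ} {D : Fin (ℓ + 1) → Submodule R M} (hD : StrictMono D)
      (hrange : Set.range D = Set.range (dimLtSubmodule R M)) :
      (∀ i : Fin ℓ, IsCMModule R (Subquotient (D i.succ) (D i.castSucc))) ↔
        ∀ k, IsCMModule R (DimQuotient R M k) :=
    forall_castSucc_succ_iff (dimLtSubmodule_mono R M) hD hrange
      (r := fun Q P ↦ IsCMModule R (Subquotient P Q)) fun P ↦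
        have := subsingleton_subquotient_iff.mpr (le_refl P)
        isCMModule_of_subsingleton R _
  constructor
  · rintro ⟨ℓ, D, hfilt, hCM⟩
    obtain ⟨hD, hrange⟩ := isDimFiltration_iff.mp hfilt
    exact (forall_iff hD hrange).mp hCM
  · intro hCM
    obtain ⟨ℓ, D, hD, hrange⟩ := exists_strictMono_fin_range_eq (dimLtSubmodule_mono R M)
    exact ⟨ℓ, D, isDimFiltration_iff.mpr ⟨hD, hrange⟩, (forall_iff hD hrange).mpr hCM⟩

end Filtration

lemma isCMModule_dimQuotient_prod_iff {R M N : Type*} [CommRing R] [IsNoetherianRing R]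
    [IsLocalRing R] [AddCommGroup M] [Module R M] [Module.Finite R M] [AddCommGroup N] [Module R N]
    [Module.Finite R N] (k : ℕ) :
    IsCMModule R (DimQuotient R (M × N) k) ↔
      IsCMModule R (DimQuotient R M k) ∧ IsCMModule R (DimQuotient R N k) := by
  unfold DimQuotient
  rw [dimLtSubmodule_prod, dimLtSubmodule_prod, isCMModule_congr (subquotientProdEquiv _ _ _ _)]
  exact isCMModule_prod_iff fun _ _ ↦
    (supportDim_dimQuotient R M k).trans (supportDim_dimQuotient R N k).symm

/-- `M ⊕ N` is sequentially Cohen-Macaulay iff both `M` and `N` are. -/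
theorem stmt3 (R : Type*) [CommRing R] [IsNoetherianRing R] [IsLocalRing R]
    (M N : Type*) [AddCommGroup M] [Module R M] [Module.Finite R M] [Nontrivial M]
    [AddCommGroup N] [Module R N] [Module.Finite R N] [Nontrivial N] :
    IsSeqCM R (M × N) ↔ IsSeqCM R M ∧ IsSeqCM R N := by
  simp only [isSeqCM_iff_forall_isCMModule_dimQuotient, isCMModule_dimQuotient_prod_iff,
    forall_and]
end

section
/- Let R be a Noetherian local ring, A a Noetherian local module-finite R-algebra, and M a finitely generated A-module such that R is a direct summand of M as an R-module. If M is a sequentially Cohen-Macaulay A-module, then R is a sequentially Cohen-Macaulay local ring. -/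
open IsLocalRing

/-
Over an integral extension `A` of `R`, an `R`-submodule `L` of `M` has the same dimension as its
`A`-span, so the dimension filtration of `M` over `A` is also the one over `R`. As the largest
submodule of a given dimension, each of its terms is stable under all `R`-endomorphisms of `M`,
in particular under the idempotent `ι ∘ π` attached to a direct summand `K`. Hence the filtration
restricts to the dimension filtration of `K` (after deleting repetitions), and every consecutive
quotient for `K` is a retract of one for `M`.

It remains to see that being Cohen-Macaulay passes from `A` to `R` and to retracts. A regular
sequence stays weakly regular on a retract, so the depth can only go up, while the dimension can
only go down and bounds the depth. By Rees' theorem, `depth_A N` controls the vanishing of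
`Ext_A^i(A / 𝔪_R A, N)`, which lets one choose a regular sequence of the same length inside
`𝔪_R`; so `depth_A N ≤ depth_R N ≤ dim_R N = dim_A N`.
-/

open CategoryTheory Abelian RingTheory.Sequence

section KrullDimension

variable {R : Type*} [CommRing R]

theorem ringKrullDim_eq_of_isIntegral_of_injective {S : Type*} [CommRing S] [Algebra R S]
    [Algebra.IsIntegral R S] (h : Function.Injective (algebraMap R S)) :
    ringKrullDim R = ringKrullDim S := by
  apply le_antisymm
  · refine iSup_le fun l => ?_
    obtain ⟨Q, -, hQ, hQl⟩ := Ideal.exists_ideal_over_prime_of_isIntegral l.head.asIdeal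
      (⊥ : Ideal S) (by simp [← RingHom.ker_eq_comap_bot, (RingHom.injective_iff_ker_eq_bot _).1 h])
    have : Q.LiesOver l.head.asIdeal := ⟨hQl.symm⟩
    obtain ⟨L, hL, -⟩ := Ideal.exists_ltSeries_of_hasGoingUp l Q
    exact hL ▸ Order.LTSeries.length_le_krullDim L
  · exact Order.krullDim_le_of_strictMono (PrimeSpectrum.comap (algebraMap R S))
      fun p q hpq => Ideal.IsIntegral.comap_lt_comap (I := p.asIdeal) (J := q.asIdeal) hpq

theorem ringKrullDim_quotient_inf (I J : Ideal R) :
    ringKrullDim (R ⧸ I ⊓ J) = max (ringKrullDim (R ⧸ I)) (ringKrullDim (R ⧸ J)) := by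
  refine le_antisymm ?_ (max_le
    (ringKrullDim_le_of_surjective _ (Ideal.Quotient.factor_surjective inf_le_left))
    (ringKrullDim_le_of_surjective _ (Ideal.Quotient.factor_surjective inf_le_right)))
  simp only [ringKrullDim_quotient]
  refine iSup_le fun l => ?_
  have le_krullDim (I' : Ideal R) (hI' : I' ≤ l.head.1.asIdeal) :
      (l.length : WithBot ℕ∞) ≤ Order.krullDim (PrimeSpectrum.zeroLocus (I' : Set R)) :=
    Order.LTSeries.length_le_krullDim
      { length := l.length
        toFun := fun i => ⟨(l i).1, hI'.trans (l.head_le i)⟩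
        step := l.step }
  rcases l.head.1.isPrime.inf_le.1 l.head.2 with hI | hJ
  · exact le_max_of_le_left (le_krullDim I hI)
  · exact le_max_of_le_right (le_krullDim J hJ)

end KrullDimension

section ModuleDim

variable {R M N : Type*} [CommRing R] [AddCommGroup M] [Module R M] [AddCommGroup N] [Module R N]

theorem moduleDim_le_of_annihilator_le (h : Module.annihilator R N ≤ Module.annihilator R M) :
    moduleDim R M ≤ moduleDim R N :=
  ringKrullDim_le_of_surjective (Ideal.Quotient.factor h) (Ideal.Quotient.factor_surjective h)

theorem moduleDim_le_of_injective (f : M →ₗ[R] N) (hf : Function.Injective f) :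
    moduleDim R M ≤ moduleDim R N :=
  moduleDim_le_of_annihilator_le (f.annihilator_le_of_injective hf)

theorem moduleDim_mono {P Q : Submodule R M} (h : P ≤ Q) : moduleDim R P ≤ moduleDim R Q :=
  moduleDim_le_of_injective _ (Submodule.inclusion_injective h)

theorem moduleDim_map_le (f : M →ₗ[R] N) (P : Submodule R M) :
    moduleDim R (P.map f) ≤ moduleDim R P :=
  moduleDim_le_of_annihilator_le
    ((f.submoduleMap P).annihilator_le_of_surjective (f.submoduleMap_surjective P))

theorem moduleDim_comap_le {f : M →ₗ[R] N} (hf : Function.Injective f) (Q : Submodule R N) :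
    moduleDim R (Q.comap f) ≤ moduleDim R Q :=
  moduleDim_le_of_injective (f.submoduleComap Q) fun _ _ hxy =>
    Subtype.ext (hf (congrArg Subtype.val hxy))

theorem moduleDim_sup (P Q : Submodule R M) :
    moduleDim R ↥(P ⊔ Q) = max (moduleDim R P) (moduleDim R Q) := by
  simp only [moduleDim]
  rw [← ringKrullDim_quotient_inf]
  exact congrArg (fun I : Ideal R => ringKrullDim (R ⧸ I)) (Submodule.annihilator_sup P Q)

theorem moduleDim_eq_bot_of_subsingleton [Subsingleton M] : moduleDim R M = ⊥ := by
  have := Ideal.Quotient.subsingleton_iff.2 (Module.annihilator_eq_top_iff (R := R).2 ‹_›)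
  exact ringKrullDim_eq_bot_of_subsingleton

theorem moduleDim_eq_supportDim_s8 [Module.Finite R M] : moduleDim R M = Module.supportDim R M :=
  (Module.supportDim_eq_ringKrullDim_quotient_annihilator R M).symm

variable (R M) in
theorem exists_isGreatest_moduleDim_le [IsNoetherian R M] (d : WithBot ℕ∞) :
    ∃ G, IsGreatest {P : Submodule R M | moduleDim R P ≤ d} G := by
  refine ⟨_, CompleteLattice.WellFoundedGT.isSupClosedCompact _ inferInstance _ ⟨⊥, ?_⟩ ?_,
    fun P hP => le_sSup hP⟩
  · exact moduleDim_eq_bot_of_subsingleton.trans_le bot_le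
  · exact fun P hP Q hQ => (moduleDim_sup P Q).trans_le (max_le hP hQ)

end ModuleDim

section RestrictScalarsDim

variable {R A M : Type*} [CommRing R] [CommRing A] [Algebra R A] [Algebra.IsIntegral R A]
  [AddCommGroup M] [Module A M] [Module R M] [IsScalarTower R A M]

variable (R A M) in
theorem moduleDim_restrictScalars : moduleDim R M = moduleDim A M := by
  have h : Module.annihilator R M = (Module.annihilator A M).comap (algebraMap R A) := by
    ext r; simp [Module.mem_annihilator]
  rw [moduleDim, h]
  exact ringKrullDim_eq_of_isIntegral_of_injective Ideal.algebraMap_quotient_injective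

theorem moduleDim_span (L : Submodule R M) :
    moduleDim A (Submodule.span A (L : Set M)) = moduleDim R L := by
  rw [← moduleDim_restrictScalars R A]
  refine le_antisymm (moduleDim_le_of_annihilator_le fun r hr => ?_)
    (moduleDim_mono (Q := (Submodule.span A (L : Set M)).restrictScalars R) Submodule.subset_span)
  have hspan : Submodule.span A (L : Set M) ≤ Submodule.torsionBy A M (algebraMap R A r) :=
    Submodule.span_le.2 fun x hx => by
      simpa using congrArg Subtype.val (Module.mem_annihilator.1 hr ⟨x, hx⟩)
  exact Module.mem_annihilator.2 fun x => Subtype.ext (by simpa using hspan x.2)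

end RestrictScalarsDim

section Depth

variable {R M K : Type*} [CommRing R] [AddCommGroup M] [Module R M] [AddCommGroup K]
  [Module R K]

theorem isWeaklyRegular_of_retract {ι : K →ₗ[R] M} {π : M →ₗ[R] K}
    (h : π ∘ₗ ι = LinearMap.id) {rs : List R} (hrs : IsWeaklyRegular M rs) :
    IsWeaklyRegular K rs := by
  induction rs generalizing M K with
  | nil => exact .nil R K
  | cons x rs ih =>
    obtain ⟨hx, hrs⟩ := (isWeaklyRegular_cons_iff M x rs).1 hrs
    have hι : Function.Injective ι := Function.LeftInverse.injective (LinearMap.congr_fun h)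
    refine .cons (hx.of_injective ι hι)
      (ih (ι := QuotSMulTop.map x ι) (π := QuotSMulTop.map x π) ?_ hrs)
    rw [← QuotSMulTop.map_comp, h, QuotSMulTop.map_id]

variable [IsLocalRing R]

variable (R M) in
theorem moduleDepth_le_moduleDim [IsNoetherianRing R] [Module.Finite R M] [Nontrivial M] :
    (moduleDepth R M : WithBot ℕ∞) ≤ moduleDim R M := by
  rw [moduleDim_eq_supportDim_s8]
  obtain ⟨d, hd⟩ := WithBot.ne_bot_iff_exists.1 (Module.supportDim_ne_bot_of_nontrivial R M)
  rw [← hd, WithBot.coe_le_coe]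
  refine sSup_le ?_
  rintro _ ⟨rs, rfl, -, hrs⟩
  have := hrs.quot_ofList_smul_nontrivial ⊤
  obtain ⟨e, he⟩ := WithBot.ne_bot_iff_exists.1 (Module.supportDim_ne_bot_of_nontrivial R
    (M ⧸ (Ideal.ofList rs • ⊤ : Submodule R M)))
  have hadd : e + rs.length = d := by
    have := Module.supportDim_add_length_eq_supportDim_of_isRegular rs hrs
    rw [← hd, ← he] at this
    exact_mod_cast this
  exact hadd ▸ le_add_self

theorem moduleDepth_le_of_retract [Module.Finite R K] [Nontrivial K] {ι : K →ₗ[R] M}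
    {π : M →ₗ[R] K} (h : π ∘ₗ ι = LinearMap.id) : moduleDepth R M ≤ moduleDepth R K := by
  refine sSup_le_sSup ?_
  rintro _ ⟨rs, rfl, hmem, hrs⟩
  exact ⟨rs, rfl, hmem, .of_isWeaklyRegular_of_mem_maximalIdeal K hmem
    (isWeaklyRegular_of_retract h hrs.toIsWeaklyRegular)⟩

end Depth

section DepthRestrictScalars

universe u v

theorem subsingleton_ext_quotSMulTop {A : Type u} [CommRing A] [Small.{v} A]
    {X M : ModuleCat.{v} A} {x : A} (hx : IsSMulRegular M x) {n : ℕ}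
    (h : ∀ i < n + 1, Subsingleton (Ext X M i)) :
    ∀ i < n, Subsingleton (Ext X (ModuleCat.of A (QuotSMulTop x M)) i) := by
  intro i hi
  have hM := AddCommGrpCat.isZero_of_iff_subsingleton.mpr (h i (by omega))
  have hM' := AddCommGrpCat.isZero_of_iff_subsingleton.mpr (h (i + 1) (by omega))
  exact AddCommGrpCat.subsingleton_of_isZero <| ShortComplex.Exact.isZero_of_both_zeros
    (Ext.covariant_sequence_exact₃' X hx.smulShortComplex_shortExact i (i + 1) rfl)
    (hM.eq_zero_of_src _) (hM'.eq_zero_of_tgt _)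

theorem exists_isSMulRegular_of_subsingleton_linearMap {R A N : Type*} [CommRing R]
    [IsNoetherianRing R] [CommRing A] [Algebra R A] [AddCommGroup N] [Module A N] [Module R N]
    [IsScalarTower R A N] [Module.Finite R N] {I : Ideal R}
    (h : Subsingleton (A ⧸ I.map (algebraMap R A) →ₗ[A] N)) : ∃ y ∈ I, IsSMulRegular N y := by
  have hR : Subsingleton (R ⧸ I →ₗ[R] N) := by
    refine subsingleton_of_forall_eq 0 fun f => ?_
    have hle : I.map (algebraMap R A) ≤ LinearMap.ker (LinearMap.toSpanSingleton A N (f 1)) :=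
      Ideal.map_le_iff_le_comap.2 fun r hr => by
        have hr1 : r • (1 : R ⧸ I) = 0 := by
          simpa [Algebra.smul_def] using Ideal.Quotient.eq_zero_iff_mem.2 hr
        simp [← map_smul, hr1]
    have hf1 : (1 : A) • f 1 = 0 :=
      LinearMap.congr_fun (h.elim (Submodule.liftQ _ _ hle) 0) (Submodule.Quotient.mk 1)
    exact Submodule.linearMap_qext _ (LinearMap.ext_ring (by simpa using hf1))
  simpa [Ideal.annihilator_quotient] using IsSMulRegular.subsingleton_linearMap_iff.1 hR

-- Taking `Ext` out of `A ⧸ I A` rather than a residue field of `A` is what puts the sequence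
-- in `I`: `A`-linear maps `A ⧸ I A → N` are `R`-linear maps `R ⧸ I → N`. Shrinking only
-- serves to match the universes.
theorem exists_isWeaklyRegular_of_subsingleton_ext {R : Type*} {A : Type u} [CommRing R]
    [IsNoetherianRing R] [CommRing A] [Algebra R A] [Small.{v} A] {I : Ideal R} {n : ℕ}
    {N : Type v} [AddCommGroup N] [Module A N] [Module R N] [IsScalarTower R A N]
    [Module.Finite R N] (h : ∀ i < n, Subsingleton
      (Ext (ModuleCat.of A (Shrink.{v} (A ⧸ I.map (algebraMap R A)))) (ModuleCat.of A N) i)) :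
    ∃ rs : List R, rs.length = n ∧ (∀ r ∈ rs, r ∈ I) ∧
      IsWeaklyRegular N (rs.map (algebraMap R A)) := by
  induction n generalizing N with
  | zero => exact ⟨[], rfl, by simp, .nil A N⟩
  | succ n ih =>
    let X := ModuleCat.of A (Shrink.{v} (A ⧸ I.map (algebraMap R A)))
    have := Ext.addEquiv₀.subsingleton_congr.1 (h 0 n.succ_pos)
    have : Subsingleton (X →ₗ[A] ModuleCat.of A N) := ModuleCat.homAddEquiv.symm.subsingleton
    have hHom : Subsingleton (A ⧸ I.map (algebraMap R A) →ₗ[A] N) :=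
      ((Shrink.linearEquiv A _).congrLeft N A).symm.subsingleton
    obtain ⟨y, hyI, hy⟩ := exists_isSMulRegular_of_subsingleton_linearMap hHom
    have hyA : IsSMulRegular N (algebraMap R A y) := (isSMulRegular_algebraMap_iff A).2 hy
    have hext := subsingleton_ext_quotSMulTop (X := X) (M := ModuleCat.of A N) hyA h
    obtain ⟨rs, hlen, hrsI, hrs⟩ := ih (N := QuotSMulTop (algebraMap R A y) N) hext
    exact ⟨y :: rs, by simp [hlen], List.forall_mem_cons.2 ⟨hyI, hrsI⟩, hrs.cons hyA⟩

theorem zeroLocus_map_maximalIdeal_subset (R A : Type*) [CommRing R] [IsLocalRing R] [CommRing A]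
    [IsLocalRing A] [Algebra R A] [Algebra.IsIntegral R A] :
    PrimeSpectrum.zeroLocus ((maximalIdeal R).map (algebraMap R A) : Set A) ⊆
      PrimeSpectrum.zeroLocus (maximalIdeal A : Set A) := by
  intro P hP
  have hcomap : maximalIdeal R = P.asIdeal.comap (algebraMap R A) :=
    (maximalIdeal.isMaximal R).eq_of_le Ideal.IsPrime.ne_top' (Ideal.map_le_iff_le_comap.1 hP)
  have : P.asIdeal.IsMaximal := Ideal.isMaximal_of_isIntegral_of_isMaximal_comap P.asIdeal
    (hcomap ▸ maximalIdeal.isMaximal R)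
  exact (IsLocalRing.eq_maximalIdeal this).ge

theorem moduleDepth_le_moduleDepth_restrictScalars (R : Type*) (A : Type u) (N : Type v)
    [CommRing R] [IsNoetherianRing R] [IsLocalRing R] [CommRing A] [IsNoetherianRing A]
    [IsLocalRing A] [Algebra R A] [Algebra.IsIntegral R A] [AddCommGroup N] [Module A N]
    [Module R N] [IsScalarTower R A N] [Module.Finite R N] :
    moduleDepth A N ≤ moduleDepth R N := by
  refine sSup_le_sSup ?_
  rintro _ ⟨rs, rfl, hmem, hrs⟩
  have := hrs.nontrivial
  have := Module.Finite.of_restrictScalars_finite R A N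
  let k := Shrink.{max u v} (A ⧸ (maximalIdeal R).map (algebraMap R A))
  have hk : Module.support A k ⊆ PrimeSpectrum.zeroLocus (maximalIdeal A : Set A) := by
    rw [(Shrink.linearEquiv A _).support_eq, Module.support_eq_zeroLocus,
      Ideal.annihilator_quotient]
    exact zeroLocus_map_maximalIdeal_subset R A
  have hne : maximalIdeal A • (⊤ : Submodule A (ULift.{u} N)) < ⊤ :=
    (Submodule.top_ne_ideal_smul_of_le_jacobson_annihilator
      (IsLocalRing.maximalIdeal_le_jacobson _)).symm.lt_top
  have : Module.Finite A k := .equiv (Shrink.linearEquiv A _).symm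
  have hext := ModuleCat.subsingleton_ext_of_exists_isRegular (maximalIdeal A)
    (ModuleCat.of A k) hk (ModuleCat.of A (ULift.{u} N)) hne rs hmem
    ((ULift.moduleEquiv.symm.isRegular_congr rs).1 hrs)
  obtain ⟨ss, hlen, hssR, hss⟩ := exists_isWeaklyRegular_of_subsingleton_ext hext
  refine ⟨ss, by rw [hlen], hssR, .of_isWeaklyRegular_of_mem_maximalIdeal N hssR ?_⟩
  exact (isWeaklyRegular_map_algebraMap_iff A N ss).1
    ((ULift.moduleEquiv.isWeaklyRegular_congr _).1 hss)

end DepthRestrictScalars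

namespace IsCMModule

variable {R M : Type*} [CommRing R] [IsNoetherianRing R] [IsLocalRing R] [AddCommGroup M]
  [Module R M] [Module.Finite R M]

theorem of_retract {K : Type*} [AddCommGroup K] [Module R K] {ι : K →ₗ[R] M} {π : M →ₗ[R] K}
    (h : π ∘ₗ ι = LinearMap.id) (hM : IsCMModule R M) : IsCMModule R K := by
  intro hK
  have hι : Function.Injective ι := Function.LeftInverse.injective (LinearMap.congr_fun h)
  have hπ : Function.Surjective π := Function.RightInverse.surjective (LinearMap.congr_fun h)
  have : Module.Finite R K := .of_surjective π hπ
  refine le_antisymm (moduleDepth_le_moduleDim R K) ?_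
  calc moduleDim R K ≤ moduleDim R M := moduleDim_le_of_injective ι hι
    _ = moduleDepth R M := (hM hι.nontrivial).symm
    _ ≤ moduleDepth R K := WithBot.coe_le_coe.2 (moduleDepth_le_of_retract h)

theorem restrictScalars {A : Type*} [CommRing A] [IsNoetherianRing A] [IsLocalRing A]
    [Algebra R A] [Algebra.IsIntegral R A] [Module A M] [IsScalarTower R A M]
    (hM : IsCMModule A M) : IsCMModule R M := by
  intro hnontrivial
  refine le_antisymm (moduleDepth_le_moduleDim R M) ?_
  calc moduleDim R M = moduleDim A M := moduleDim_restrictScalars R A M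
    _ = moduleDepth A M := (hM hnontrivial).symm
    _ ≤ moduleDepth R M :=
      WithBot.coe_le_coe.2 (moduleDepth_le_moduleDepth_restrictScalars R A M)

end IsCMModule

section Chain

variable {α : Type*} [PartialOrder α]

theorem exists_strictMono_range_eq_of_isChain {s : Set α} (hs : IsChain (· ≤ ·) s)
    (hfin : s.Finite) (hne : s.Nonempty) :
    ∃ (k : ℕ) (g : Fin (k + 1) → α), StrictMono g ∧ Set.range g = s := by
  classical
  let : LinearOrder s :=
    { (inferInstance : PartialOrder s) with
      le_total := fun a b => hs.total a.2 b.2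
      toDecidableLE := Classical.decRel _ }
  have := hfin.fintype
  have := hne.to_subtype
  obtain ⟨k, hk⟩ := Nat.exists_eq_succ_of_ne_zero (Fintype.card_ne_zero (α := s))
  let e : Fin (k + 1) ≃o s := monoEquivOfFin s hk
  exact ⟨k, fun i => e i, fun _ _ hij => e.strictMono hij,
    (e.surjective.range_comp Subtype.val).trans Subtype.range_coe⟩

theorem exists_consecutive_eq_of_range_eq {n k : ℕ} {f : Fin (n + 1) → α} (hf : Monotone f)
    {g : Fin (k + 1) → α} (hg : StrictMono g) (hrange : Set.range g = Set.range f) (i : Fin k) :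
    ∃ j : Fin n, g i.castSucc = f j.castSucc ∧ g i.succ = f j.succ := by
  obtain ⟨p, hp, hpmax⟩ := (Set.toFinite {p | f p = g i.castSucc}).exists_maximal
    (hrange.subset (Set.mem_range_self i.castSucc))
  obtain ⟨q, hq⟩ := hrange.subset (Set.mem_range_self i.succ)
  have hpq : p < q := by
    by_contra! hqp
    exact (hg i.castSucc_lt_succ).not_ge (hp ▸ hq ▸ hf hqp)
  obtain ⟨j, rfl⟩ := Fin.exists_castSucc_eq.2 (hpq.trans_le q.le_last).ne
  obtain ⟨m, hm⟩ := hrange.superset (Set.mem_range_self j.succ)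
  have hlt : i.castSucc < m := by
    refine hg.lt_iff_lt.1 (lt_of_le_of_ne ?_ fun heq => ?_)
    · exact hp ▸ hm ▸ hf j.castSucc_lt_succ.le
    · exact j.castSucc_lt_succ.not_ge (hpmax (hm.symm.trans heq.symm) j.castSucc_lt_succ.le)
  have hle : m ≤ i.succ := hg.le_iff_le.1 (hm ▸ hq ▸ hf (Fin.castSucc_lt_iff_succ_le.1 hpq))
  exact ⟨j, hp.symm, le_antisymm (Fin.castSucc_lt_iff_succ_le.1 hlt) hle ▸ hm⟩

end Chain

namespace IsDimFiltration

variable {R M : Type*} [CommRing R] [AddCommGroup M] [Module R M] {ℓ : ℕ}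

theorem restrictScalars {A : Type*} [CommRing A] [Algebra R A] [Algebra.IsIntegral R A]
    [Module A M] [IsScalarTower R A M] {D : Fin (ℓ + 1) → Submodule A M}
    (hD : IsDimFiltration A M ℓ D) :
    IsDimFiltration R M ℓ fun i => (D i).restrictScalars R := by
  obtain ⟨hbot, htop, hmono, hgreatest, hexhaust⟩ := hD
  have dim_eq (P : Submodule A M) : moduleDim R (P.restrictScalars R) = moduleDim A P :=
    moduleDim_restrictScalars R A P
  refine ⟨by simp [hbot], by simp [htop], fun i j hij => hmono hij,
    fun i => ⟨le_refl (moduleDim _ _), fun N hN => ?_⟩, fun N hN hNgreatest => ?_⟩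
  · have hspan : Submodule.span A (N : Set M) ≤ D (Fin.succ i) :=
      (hgreatest i).2 ((moduleDim_span N).trans_le (le_of_le_of_eq hN (dim_eq _)))
    exact Submodule.subset_span.trans hspan
  · have hN_eq : (Submodule.span A (N : Set M)).restrictScalars R = N :=
      le_antisymm (hNgreatest.2 ((dim_eq _).trans (moduleDim_span N)).le) Submodule.subset_span
    obtain ⟨i, hi⟩ := hexhaust (Submodule.span A (N : Set M))
      (fun h => hN (by rw [← hN_eq, h, Submodule.restrictScalars_bot]))
      ⟨le_refl (moduleDim _ _), fun N' hN' x hx => Submodule.subset_span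
        (hNgreatest.2 ((dim_eq N').trans_le (le_of_le_of_eq hN' (moduleDim_span N))) hx)⟩
    exact ⟨i, by simp only [hi, hN_eq]⟩

variable {D : Fin (ℓ + 1) → Submodule R M}

theorem le_comap_self (hD : IsDimFiltration R M ℓ D) (f : M →ₗ[R] M) (i : Fin (ℓ + 1)) :
    D i ≤ (D i).comap f := by
  obtain ⟨hbot, -, -, hgreatest, -⟩ := hD
  induction i using Fin.cases with
  | zero => simp [hbot]
  | succ i => exact Submodule.map_le_iff_le_comap.1 ((hgreatest i).2 (moduleDim_map_le f _))

theorem exists_comap_eq [IsNoetherian R M] {K : Type*} [AddCommGroup K] [Module R K]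
    (hD : IsDimFiltration R M ℓ D) {ι : K →ₗ[R] M} (hι : Function.Injective ι)
    {N : Submodule R K} (hN : N ≠ ⊥)
    (hNgreatest : IsGreatest {N' : Submodule R K | moduleDim R N' ≤ moduleDim R N} N) :
    ∃ i, (D i).comap ι = N := by
  obtain ⟨G, hGdim, hGmax⟩ := exists_isGreatest_moduleDim_le R M (moduleDim R N)
  have hcomap : G.comap ι = N := le_antisymm
    (hNgreatest.2 ((moduleDim_comap_le hι G).trans hGdim))
    (Submodule.map_le_iff_le_comap.1 (hGmax (moduleDim_map_le ι N)))
  have hdim : moduleDim R N ≤ moduleDim R G := hcomap ▸ moduleDim_comap_le hι G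
  have hG : G ≠ ⊥ := by
    rintro rfl
    exact hN (hcomap ▸ LinearMap.ker_eq_bot.2 hι)
  obtain ⟨-, -, -, -, hexhaust⟩ := hD
  obtain ⟨i, rfl⟩ := hexhaust G hG
    ⟨le_refl (moduleDim _ _), fun N' hN' => hGmax (hN'.out.trans hGdim)⟩
  exact ⟨i, hcomap⟩

theorem exists_comap [IsNoetherian R M] {K : Type*} [AddCommGroup K] [Module R K]
    (hD : IsDimFiltration R M ℓ D) {ι : K →ₗ[R] M} (hι : Function.Injective ι) :
    ∃ (k : ℕ) (E : Fin (k + 1) → Submodule R K), IsDimFiltration R K k E ∧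
      ∀ i : Fin k, ∃ j : Fin ℓ,
        E i.castSucc = (D j.castSucc).comap ι ∧ E i.succ = (D j.succ).comap ι := by
  have ⟨hbot, htop, hstrict, hgreatest, _⟩ := hD
  have hmono : Monotone fun i => (D i).comap ι :=
    fun _ _ hij => Submodule.comap_mono (hstrict.monotone hij)
  obtain ⟨k, E, hE, hrange⟩ := exists_strictMono_range_eq_of_isChain hmono.isChain_range
    (Set.finite_range _) (Set.range_nonempty _)
  have hstep := exists_consecutive_eq_of_range_eq hmono hE hrange
  refine ⟨k, E, ⟨eq_bot_iff.2 ?_, eq_top_iff.2 ?_, hE, fun i => ⟨le_refl (moduleDim _ _), ?_⟩,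
    fun N hN hNgreatest => ?_⟩, hstep⟩
  · obtain ⟨i, hi : E i = (D 0).comap ι⟩ := hrange.superset ⟨0, rfl⟩
    calc E 0 ≤ E i := hE.monotone (Fin.zero_le i)
      _ = ⊥ := by rw [hi, hbot, Submodule.comap_bot, LinearMap.ker_eq_bot.2 hι]
  · obtain ⟨i, hi : E i = (D (Fin.last ℓ)).comap ι⟩ := hrange.superset ⟨Fin.last ℓ, rfl⟩
    calc ⊤ = E i := by rw [hi, htop, Submodule.comap_top]
      _ ≤ E (Fin.last k) := hE.monotone i.le_last
  · obtain ⟨j, -, hj⟩ := hstep i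
    rw [hj]
    exact fun N hN => Submodule.map_le_iff_le_comap.1 ((hgreatest j).2
      ((moduleDim_map_le ι N).trans (le_trans hN (moduleDim_comap_le hι _))))
  · exact hrange.superset (hD.exists_comap_eq hι hN hNgreatest)

end IsDimFiltration

theorem exists_retract_comap_subquotient {R M K : Type*} [CommRing R] [AddCommGroup M]
    [Module R M] [AddCommGroup K] [Module R K] {ι : K →ₗ[R] M} {π : M →ₗ[R] K}
    (h : π ∘ₗ ι = LinearMap.id) {P Q : Submodule R M} (hP : P ≤ P.comap (ι ∘ₗ π))
    (hQ : Q ≤ Q.comap (ι ∘ₗ π)) :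
    ∃ (i : (Q.comap ι ⧸ (P.comap ι).comap (Q.comap ι).subtype) →ₗ[R] Q ⧸ P.comap Q.subtype)
      (p : (Q ⧸ P.comap Q.subtype) →ₗ[R] Q.comap ι ⧸ (P.comap ι).comap (Q.comap ι).subtype),
      p ∘ₗ i = LinearMap.id := by
  let ι' : Q.comap ι →ₗ[R] Q := ι.restrict fun _ hx => hx
  let π' : Q →ₗ[R] Q.comap ι := π.restrict hQ
  refine ⟨Submodule.mapQ _ _ ι' fun _ hx => hx, Submodule.mapQ _ _ π' fun _ hx => hP hx, ?_⟩
  have hπι' : π' ∘ₗ ι' = LinearMap.id :=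
    LinearMap.ext fun x => Subtype.ext (LinearMap.congr_fun h (x : K))
  refine Submodule.linearMap_qext _ (LinearMap.ext fun x => ?_)
  exact congrArg Submodule.Quotient.mk (LinearMap.congr_fun hπι' x)

namespace IsSeqCM

variable {R M : Type*} [CommRing R] [IsNoetherianRing R] [IsLocalRing R] [AddCommGroup M]
  [Module R M] [Module.Finite R M]

theorem of_retract {K : Type*} [AddCommGroup K] [Module R K] {ι : K →ₗ[R] M} {π : M →ₗ[R] K}
    (h : π ∘ₗ ι = LinearMap.id) (hM : IsSeqCM R M) : IsSeqCM R K := by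
  obtain ⟨ℓ, D, hD, hCM⟩ := hM
  have hι : Function.Injective ι := Function.LeftInverse.injective (LinearMap.congr_fun h)
  obtain ⟨k, E, hE, hstep⟩ := hD.exists_comap hι
  refine ⟨k, E, hE, fun i => ?_⟩
  obtain ⟨j, hj, hj'⟩ := hstep i
  obtain ⟨_, _, hretract⟩ := exists_retract_comap_subquotient h
    (hD.le_comap_self (ι ∘ₗ π) j.castSucc) (hD.le_comap_self (ι ∘ₗ π) j.succ)
  rw [hj, hj']
  exact (hCM j).of_retract hretract

theorem restrictScalars {A : Type*} [CommRing A] [IsNoetherianRing A] [IsLocalRing A]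
    [Algebra R A] [Algebra.IsIntegral R A] [Module A M] [IsScalarTower R A M]
    (hM : IsSeqCM A M) : IsSeqCM R M := by
  obtain ⟨ℓ, D, hD, hCM⟩ := hM
  refine ⟨ℓ, _, hD.restrictScalars, fun i => ?_⟩
  let P := (D i.castSucc).comap (D i.succ).subtype
  have : Module.Finite R (D i.succ) :=
    inferInstanceAs (Module.Finite R ((D i.succ).restrictScalars R))
  have : Module.Finite R (D i.succ ⧸ P) :=
    .of_surjective (P.mkQ.restrictScalars R) P.mkQ_surjective
  exact (hCM i).restrictScalars.of_retract (Submodule.Quotient.restrictScalarsEquiv R P).symm_comp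

end IsSeqCM

theorem stmt8_general (R A M K : Type*) [CommRing R] [IsNoetherianRing R] [IsLocalRing R]
    [CommRing A] [IsNoetherianRing A] [IsLocalRing A] [Algebra R A] [Algebra.IsIntegral R A]
    [AddCommGroup M] [Module A M] [Module R M] [IsScalarTower R A M] [Module.Finite R M]
    [AddCommGroup K] [Module R K] (ι : K →ₗ[R] M) (π : M →ₗ[R] K)
    (hsplit : π ∘ₗ ι = LinearMap.id) (hM : IsSeqCM A M) : IsSeqCM R K :=
  hM.restrictScalars.of_retract hsplit

/-- If `R` is a direct summand of a finitely generated `A`-module `M`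
(as an `R`-module) and `M` is a sequentially Cohen-Macaulay `A`-module, then `R` is a
sequentially Cohen-Macaulay local ring. -/
theorem stmt8 (R : Type*) [CommRing R] [IsNoetherianRing R] [IsLocalRing R]
    (A : Type*) [CommRing A] [IsNoetherianRing A] [IsLocalRing A]
    [Algebra R A] [Module.Finite R A]
    (M : Type*) [AddCommGroup M] [Module A M] [Module.Finite A M]
    [Module R M] [IsScalarTower R A M]
    (ι : R →ₗ[R] M) (π : M →ₗ[R] R) (hsplit : π.comp ι = LinearMap.id)
    (hM : IsSeqCM A M) :
    IsSeqCMRing R :=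
  have := Module.Finite.trans (R := R) A M
  stmt8_general R A M R ι π hsplit hM
end
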